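/- arXiv:1902.09599 — 2 statements merged into one kernel-verified Lean document; each statement's English description precedes it below -/
import Mathlib

section
/- (Proposition 2) Let q be a mask distribution on M with support S_q = {m ∈ M : q(m) > 0}, and fix τ ∈ P. If x₁, x₂ : I → ℝ satisfy T_{q,τ} x₁ = T_{q,τ} x₂, then x₁([v]_m) = x₂([v]_m) for every v ∈ I and every m ∈ S_q; that is, the vector T_{q,τ} x determines all the marginals of x on supported masks. -/
/-!
The masking maps compose by intersecting masks, so the `m`-marginal of `T q τ x` is a combination
of the marginals of `x` on the masks `m ⊓ m'`, with weights `q m'` (`marg_T`). Hence the marginals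
of `x` can be recovered by induction on `m`, for all masks `m` lying below a supported mask: the
terms with `m ⊓ m' < m` are known, and the terms with `m ≤ m'` add up to
`(∑_{m' ≥ m} q m') * marg x m v`, whose coefficient is positive.
-/

open Finset
open scoped Classical

/-- The transition operator `T_{q,τ}`: for a mask distribution `q` on masks
`Fin n → Bool`, a fill-in value `τ`, and `x : (Fin n → P) → ℝ`,
`(T q τ x) v = ∑_{m} ∑_{u} q m * x u * [f_τ(u, m) = v]`, where the masking
operator is `f_τ(u,m) d = if m d then u d else τ`. -/
noncomputable def T {n : ℕ} {P : Type*} [Fintype P] [DecidableEq P]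
    (q : (Fin n → Bool) → ℝ) (τ : P) (x : (Fin n → P) → ℝ) : (Fin n → P) → ℝ :=
  fun v => ∑ m : Fin n → Bool, ∑ u : Fin n → P,
    q m * x u * (if (fun d => if m d then u d else τ) = v then (1 : ℝ) else 0)

/-- The marginal `x([v]_m) = ∑_{u ∈ [v]_m} x u`, where `u ∈ [v]_m` iff
`u` agrees with `v` on every coordinate observed by the mask `m`. -/
noncomputable def marg {n : ℕ} {P : Type*} [Fintype P] [DecidableEq P]
    (x : (Fin n → P) → ℝ) (m : Fin n → Bool) (v : Fin n → P) : ℝ :=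
  ∑ u : Fin n → P, if (∀ d, m d = true → v d = u d) then x u else 0

/-- The masked vector `f_τ(u, m')` lies in the class `[v]_m` iff `u ∈ [v]_{m ⊓ m'}` and `v` equals
`τ` on the coordinates seen by `m` but hidden by `m'`; summing this over `u` and `m'` expresses the
marginals of `T q τ x` through those of `x`. -/
lemma marg_T {n : ℕ} {P : Type*} [Fintype P] [DecidableEq P]
    (q : (Fin n → Bool) → ℝ) (τ : P) (x : (Fin n → P) → ℝ) (m : Fin n → Bool) (v : Fin n → P) :
    marg (T q τ x) m v = ∑ m' : Fin n → Bool,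
      q m' * (if ∀ d, m d = true → m' d = false → v d = τ then marg x (m ⊓ m') v else 0) := by
  have h1 : marg (T q τ x) m v = ∑ w : Fin n → P, ∑ m' : Fin n → Bool, ∑ u : Fin n → P,
      if (fun d => if m' d then u d else τ) = w then
        (if ∀ d, m d = true → v d = w d then q m' * x u else 0) else 0 := by
    unfold marg T
    refine sum_congr rfl fun w _ => ?_
    by_cases hw : ∀ d, m d = true → v d = w d
    · simp only [if_pos hw, mul_ite, mul_one, mul_zero]
    · simp only [if_neg hw, ite_self, sum_const_zero]
  rw [h1, sum_comm]
  refine sum_congr rfl fun m' _ => ?_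
  rw [sum_comm]
  simp only [sum_ite_eq, mem_univ, if_true]
  unfold marg
  by_cases hτ : ∀ d, m d = true → m' d = false → v d = τ
  · rw [if_pos hτ, mul_sum]
    refine sum_congr rfl fun u _ => ?_
    have hiff : (∀ d, m d = true → v d = if m' d then u d else τ) ↔
        ∀ d, (m ⊓ m') d = true → v d = u d := by
      refine forall_congr' fun d => ?_
      have := hτ d
      cases hm : m d <;> cases hm' : m' d <;> simp_all
    simp only [hiff, mul_ite, mul_zero]
  · rw [if_neg hτ, mul_zero]
    refine sum_eq_zero fun u _ => if_neg fun hu => hτ fun d hd hd' => ?_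
    simpa [hd'] using hu d hd

/-- Proposition 2: `T_{q,τ} x` determines all the marginals of `x` on
supported masks. -/
theorem stmt4 {n : ℕ} (hn : 1 ≤ n) {P : Type*} [Fintype P] [Nonempty P] [DecidableEq P]
    (q : (Fin n → Bool) → ℝ) (hq0 : ∀ m, 0 ≤ q m)
    (hq1 : (∑ m : Fin n → Bool, q m) = 1)
    (τ : P) (x₁ x₂ : (Fin n → P) → ℝ)
    (h : T q τ x₁ = T q τ x₂) :
    ∀ (v : Fin n → P) (m : Fin n → Bool), 0 < q m → marg x₁ m v = marg x₂ m v := by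
  -- Masks below a supported one are included so that the induction passes to `m ⊓ m'`.
  suffices key : ∀ m : Fin n → Bool, (∃ m₀, m ≤ m₀ ∧ 0 < q m₀) →
      ∀ v, marg x₁ m v = marg x₂ m v from fun v m hm => key m ⟨m, le_rfl, hm⟩ v
  intro m
  induction m using WellFoundedLT.induction with
  | ind m ih =>
    rintro ⟨m₀, hm₀, hq⟩ v
    have hT : marg (T q τ x₁) m v = marg (T q τ x₂) m v := by rw [h]
    rw [marg_T, marg_T, ← sub_eq_zero, ← sum_sub_distrib] at hT
    have hterm : ∀ m' : Fin n → Bool,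
        q m' * (if ∀ d, m d = true → m' d = false → v d = τ then marg x₁ (m ⊓ m') v else 0) -
        q m' * (if ∀ d, m d = true → m' d = false → v d = τ then marg x₂ (m ⊓ m') v else 0) =
        (if m ≤ m' then q m' else 0) * (marg x₁ m v - marg x₂ m v) := by
      intro m'
      by_cases hle : m ≤ m'
      · have hc : ∀ d, m d = true → m' d = false → v d = τ := by
          intro d hd hd'
          have := hle d hd
          simp [hd'] at this
        rw [if_pos hc, if_pos hc, if_pos hle, inf_eq_left.mpr hle, mul_sub]
      · have hlt : m ⊓ m' < m := inf_lt_left.mpr hle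
        rw [ih _ hlt ⟨m₀, hlt.le.trans hm₀, hq⟩ v, if_neg hle, sub_self, zero_mul]
    simp only [hterm] at hT
    rw [← sum_mul] at hT
    have hpos : 0 < ∑ m' : Fin n → Bool, if m ≤ m' then q m' else 0 :=
      sum_pos' (fun m' _ => by split_ifs <;> simp [hq0]) ⟨m₀, mem_univ _, by simpa [hm₀] using hq⟩
    exact sub_eq_zero.mp ((mul_eq_zero.mp hT).resolve_left hpos.ne')
end

section
/- (Corollary 2, joint-with-mask form) Let q be a mask distribution on M and fix τ ∈ P. For x₁, x₂ : I → ℝ, the following are equivalent: (i) the distributions of the masked sample alone agree, i.e., T_{q,τ} x₁ = T_{q,τ} x₂; (ii) the joint distributions of the masked sample together with the mask agree, i.e., for every m ∈ M and every v ∈ I, q(m)·Σ_{u ∈ I, f_τ(u,m) = v} x₁(u) = q(m)·Σ_{u ∈ I, f_τ(u,m) = v} x₂(u). Consequently, observing the location of the missing values in addition to the masked samples provides no additional power to distinguish data distributions, and if the data distribution is not uniquely recoverable from masked samples alone it remains not uniquely recoverable when the missing-value locations are also observed. -/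
/-!
Write `A m` for the pushforward of signed weights along `u ↦ f_τ(u, m)`. Then `T q τ = ∑ m, q m • A m`,
and `A k ∘ A m = A (k ⊓ m)`, because masking by `m` and then by `k` keeps exactly the coordinates
observed by both (`maskPush_maskPush`).

By linearity it suffices to show that `∑ m, q m • A m x = 0` forces `A m x = 0` whenever `q m > 0`.
The stronger claim `A k x = 0` for every `k` below some `m` with `q m > 0` follows by well-founded
induction on `k` (`maskPush_eq_zero`). Applying `A k` to the hypothesis gives
`∑ m', q m' • A (k ⊓ m') x = 0`. If `q m' > 0` and `k ≰ m'`, then `k ⊓ m' < k` lies below `m'`, so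
the induction hypothesis kills the term; terms with `q m' = 0` vanish, and those with `k ≤ m'` equal
`q m' • A k x`. Hence `A k x` is annihilated by `∑_{m' ≥ k} q m'`, which is positive.
-/

open Finset
open scoped Classical

/-- The pushforward of `x : (Fin n → P) → ℝ` along the masking map `u ↦ f_τ(u, m)`,
as a linear map. -/
noncomputable def maskPush {n : ℕ} {P : Type*} [Fintype P] [DecidableEq P]
    (τ : P) (m : Fin n → Bool) : ((Fin n → P) → ℝ) →ₗ[ℝ] ((Fin n → P) → ℝ) where
  toFun x := fun v => ∑ u : Fin n → P,
    if (fun d => if m d then u d else τ) = v then x u else 0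
  map_add' x y := by
    funext v
    simp only [Pi.add_apply, ← Finset.sum_add_distrib]
    refine Finset.sum_congr rfl fun u _ => ?_
    split_ifs <;> simp
  map_smul' c x := by
    funext v
    simp [Finset.mul_sum]

lemma maskPush_apply {n : ℕ} {P : Type*} [Fintype P] [DecidableEq P]
    (τ : P) (m : Fin n → Bool) (x : (Fin n → P) → ℝ) (v : Fin n → P) :
    maskPush τ m x v = ∑ u : Fin n → P,
      if (fun d => if m d then u d else τ) = v then x u else 0 := rfl

lemma maskPush_maskPush {n : ℕ} {P : Type*} [Fintype P] [DecidableEq P]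
    (τ : P) (k m : Fin n → Bool) (x : (Fin n → P) → ℝ) :
    maskPush τ k (maskPush τ m x) = maskPush τ (k ⊓ m) x := by
  funext v
  simp only [maskPush_apply]
  simp_rw [← Finset.sum_filter (s := Finset.univ) (p := fun w : Fin n → P =>
    (fun d => if k d then w d else τ) = v)]
  rw [Finset.sum_comm]
  refine Finset.sum_congr rfl fun u _ => ?_
  rw [Finset.sum_ite_eq]
  have h : (fun d => if k d = true then (if m d = true then u d else τ) else τ)
      = fun d => if (k ⊓ m) d = true then u d else τ := by
    funext d
    cases hk : k d <;> cases hm : m d <;> simp [hk, hm]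
  simp only [Finset.mem_filter, Finset.mem_univ, true_and, h]

lemma T_eq_sum_maskPush {n : ℕ} {P : Type*} [Fintype P] [DecidableEq P]
    (q : (Fin n → Bool) → ℝ) (τ : P) (x : (Fin n → P) → ℝ) :
    T q τ x = ∑ m : Fin n → Bool, q m • maskPush τ m x := by
  funext v
  simp only [T, Finset.sum_apply, Pi.smul_apply, smul_eq_mul, maskPush_apply, Finset.mul_sum]
  refine Finset.sum_congr rfl fun m _ => Finset.sum_congr rfl fun u _ => ?_
  split_ifs <;> simp

/-- A signed weight in the kernel of `T q τ` has zero pushforward along every mask lying below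
the support of `q`. Passing from the support to its lower closure is what makes the
induction work. -/
lemma maskPush_eq_zero {n : ℕ} {P : Type*} [Fintype P] [DecidableEq P]
    (q : (Fin n → Bool) → ℝ) (hq0 : ∀ m, 0 ≤ q m) (τ : P) (x : (Fin n → P) → ℝ)
    (hx : ∑ m : Fin n → Bool, q m • maskPush τ m x = 0) (k : Fin n → Bool) :
    (∃ m, k ≤ m ∧ 0 < q m) → maskPush τ k x = 0 := by
  induction k using WellFoundedLT.induction with
  | ind k ih =>
    rintro ⟨m, hkm, hm⟩
    have h := congrArg (maskPush τ k) hx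
    simp only [map_sum, map_smul, map_zero, maskPush_maskPush] at h
    have hterm : ∀ m' : Fin n → Bool, q m' • maskPush τ (k ⊓ m') x
        = (if k ≤ m' then q m' else 0) • maskPush τ k x := by
      intro m'
      by_cases hk : k ≤ m'
      · rw [if_pos hk, inf_eq_left.mpr hk]
      · rw [if_neg hk, zero_smul]
        rcases (hq0 m').eq_or_lt with h0 | h0
        · rw [← h0, zero_smul]
        · rw [ih (k ⊓ m') (inf_lt_left.mpr hk) ⟨m', inf_le_right, h0⟩, smul_zero]
    rw [Finset.sum_congr rfl fun m' _ => hterm m', ← Finset.sum_smul] at h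
    refine (smul_eq_zero.mp h).resolve_left (ne_of_gt ?_)
    refine Finset.sum_pos' (fun m' _ => ?_) ⟨m, Finset.mem_univ m, by rwa [if_pos hkm]⟩
    split_ifs
    exacts [hq0 m', le_rfl]

/-- Corollary 2 (joint-with-mask form): the distributions of the masked sample
alone agree iff the joint distributions of the masked sample together with the
mask agree. -/
theorem stmt14 {n : ℕ} (hn : 1 ≤ n) {P : Type*} [Fintype P] [Nonempty P] [DecidableEq P]
    (q : (Fin n → Bool) → ℝ) (hq0 : ∀ m, 0 ≤ q m)
    (hq1 : (∑ m : Fin n → Bool, q m) = 1)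
    (τ : P) (x₁ x₂ : (Fin n → P) → ℝ) :
    T q τ x₁ = T q τ x₂ ↔
      ∀ (m : Fin n → Bool) (v : Fin n → P),
        q m * (∑ u : Fin n → P,
            if (fun d => if m d then u d else τ) = v then x₁ u else 0) =
        q m * (∑ u : Fin n → P,
            if (fun d => if m d then u d else τ) = v then x₂ u else 0) := by
  simp only [← maskPush_apply]
  rw [T_eq_sum_maskPush, T_eq_sum_maskPush]
  constructor
  · intro h m v
    rcases (hq0 m).eq_or_lt with h0 | h0
    · rw [← h0, zero_mul, zero_mul]
    · have hx : ∑ m : Fin n → Bool, q m • maskPush τ m (x₁ - x₂) = 0 := by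
        simp only [map_sub, smul_sub, Finset.sum_sub_distrib, h, sub_self]
      have hz := maskPush_eq_zero q hq0 τ _ hx m ⟨m, le_rfl, h0⟩
      rw [map_sub, sub_eq_zero] at hz
      rw [hz]
  · intro h
    refine Finset.sum_congr rfl fun m _ => ?_
    funext v
    exact h m v
end
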